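/- Let ε > 0 and let d be sufficiently large in terms of ε. If G is an n-vertex graph with d ≤ δ(G) ≤ Δ(G) ≤ (1+ε)d, then the vertices of G can be partitioned into at most 2εn vertex-disjoint paths (each vertex lies on exactly one path; single vertices count as paths). -/

import Mathlib

open Finset
open scoped Classical
noncomputable section

/-!
Distribute the vertices randomly among `m` linearly ordered layers and keep only the edges between
consecutive layers. A typical vertex of `G` has about `d / m` neighbors in every layer, with an
error of at most about `√d` by a variance computation, so the bipartite graphs between consecutive
layers are nearly regular. By Hall's theorem with deficiency, all but few vertices can be given
distinct predecessors in the layer below. As arcs go upwards they form vertex-disjoint paths, one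
for each vertex without a predecessor. These vertices number at most about `n / m` (the lowest
layer), plus `ε n` (the irregularity of `G`), plus `O(m / √d) n` (the random errors).
-/

/-- A partition of the vertex set into paths of the relation `r`, each path being the list of its
vertices in order. -/
structure IsPathPartition {α ι : Type*} (r : α → α → Prop) (f : ι → List α) : Prop where
  ne_nil : ∀ i, f i ≠ []
  nodup : ∀ i, (f i).Nodup
  isChain : ∀ i, (f i).IsChain r
  existsUnique_mem : ∀ a, ∃! i, a ∈ f i

section Relation

open Relation Function

variable {α ι κ : Type*} {r s : α → α → Prop} {f : ι → List α}

theorem IsPathPartition.mono (hf : IsPathPartition r f) (h : ∀ a b, r a b → s a b) :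
    IsPathPartition s f where
  __ := hf
  isChain i := (hf.isChain i).imp h

theorem IsPathPartition.comp_equiv (hf : IsPathPartition r f) (e : κ ≃ ι) :
    IsPathPartition r (f ∘ e) where
  ne_nil i := hf.ne_nil (e i)
  nodup i := hf.nodup (e i)
  isChain i := hf.isChain (e i)
  existsUnique_mem a := e.existsUnique_congr_left.2 <| by simpa using hf.existsUnique_mem a

theorem nodup_of_isChain_of_wellFounded_swap (hr : WellFounded (swap r)) {l : List α}
    (hl : l.IsChain r) : l.Nodup := by
  have hpair : l.Pairwise (TransGen r) := List.isChain_iff_pairwise.1 (hl.imp fun _ _ ↦ .single)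
  refine hpair.imp fun {a b} hab heq ↦ ?_
  subst heq
  exact hr.transGen.irrefl.irrefl a (transGen_swap.2 hab)

theorem exists_isChain_cons_mem_iff_reflTransGen (hwf : WellFounded (swap r))
    (hr : Relator.RightUnique r) (a : α) :
    ∃ l, (a :: l).IsChain r ∧ ∀ b, b ∈ a :: l ↔ ReflTransGen r a b := by
  induction a using hwf.induction with
  | _ a ih =>
    by_cases hsucc : ∃ b, r a b
    · obtain ⟨b, hab⟩ := hsucc
      obtain ⟨l, hl, hmem⟩ := ih b hab
      refine ⟨b :: l, hl.cons_cons hab, fun x ↦ ?_⟩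
      rw [List.mem_cons, hmem, ReflTransGen.cases_head_iff (a := a), eq_comm]
      refine or_congr_right ⟨fun hbx ↦ ⟨b, hab, hbx⟩, ?_⟩
      rintro ⟨c, hac, hcx⟩
      rwa [hr hab hac]
    · refine ⟨[], List.isChain_singleton a, fun x ↦ ?_⟩
      rw [List.mem_singleton, ReflTransGen.cases_head_iff, eq_comm]
      exact (or_iff_left fun ⟨c, hac, _⟩ ↦ hsucc ⟨c, hac⟩).symm

theorem existsUnique_source_reflTransGen (hwf : WellFounded r) (hr : Relator.LeftUnique r) (b : α) :
    ∃! a : {a // ∀ x, ¬ r x a}, ReflTransGen r a b := by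
  obtain ⟨a, hab, hmin⟩ := hwf.has_min {a | ReflTransGen r a b} ⟨b, .refl⟩
  have hsource (x) : ¬ r x a := fun hxa ↦ hmin x (.head hxa hab) hxa
  refine ⟨⟨a, hsource⟩, hab, fun ⟨a', hsource'⟩ ha'b ↦ Subtype.ext ?_⟩
  rcases ReflTransGen.total_of_right_unique hr.flip (reflTransGen_swap.2 ha'b)
    (reflTransGen_swap.2 hab) with h | h
  · exact h.cases_head.resolve_right fun ⟨x, hx, _⟩ ↦ hsource' x hx
  · exact (h.cases_head.resolve_right fun ⟨x, hx, _⟩ ↦ hsource x hx).symm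

theorem exists_isPathPartition_of_biUnique (hwf : WellFounded r) (hwf' : WellFounded (swap r))
    (hr : Relator.BiUnique r) :
    ∃ f : {a // ∀ x, ¬ r x a} → List α, IsPathPartition r f := by
  choose l hl hmem using exists_isChain_cons_mem_iff_reflTransGen hwf' hr.2
  refine ⟨fun a ↦ a :: l a, ?_, ?_, ?_, ?_⟩
  · exact fun a ↦ List.cons_ne_nil _ _
  · exact fun a ↦ nodup_of_isChain_of_wellFounded_swap hwf' (hl a)
  · exact fun a ↦ hl a
  · simpa only [hmem] using existsUnique_source_reflTransGen hwf hr.1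

end Relation

section Hall

variable {α ι : Type*} [DecidableEq α] (N : ι → Finset α)

/-- Adding `t` new elements to every `N i` turns this into the usual Hall theorem. -/
theorem exists_biUnique_of_card_le_card_biUnion_add {t : ℕ}
    (h : ∀ S : Finset ι, #S ≤ #(S.biUnion N) + t) :
    ∃ r : α → ι → Prop, Relator.BiUnique r ∧ (∀ a i, r a i → a ∈ N i) ∧
      Nat.card {i // ∀ a, ¬ r a i} ≤ t := by
  have hall (S : Finset ι) : #S ≤ #(S.biUnion fun i ↦ (N i).disjSum (univ : Finset (Fin t))) := by
    obtain rfl | ⟨i, hi⟩ := S.eq_empty_or_nonempty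
    · exact Nat.zero_le _
    calc #S ≤ #((S.biUnion N).disjSum (univ : Finset (Fin t))) := by simpa using h S
      _ ≤ _ := card_le_card fun x hx ↦ by
        rcases x with x | x
        · simpa using hx
        · exact mem_biUnion.2 ⟨i, hi, by simp⟩
  obtain ⟨f, hf, hfN⟩ := (all_card_le_biUnion_card_iff_exists_injective _).1 hall
  refine ⟨fun a i ↦ f i = .inl a, ⟨fun a b i ha hb ↦ ?_, fun a i j hi hj ↦ ?_⟩, fun a i hi ↦ ?_, ?_⟩
  · exact Sum.inl_injective (ha.symm.trans hb)
  · exact hf (hi.trans hj.symm)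
  · simpa [hi] using hfN i
  · have hnew (i : {i // ∀ a, f i ≠ .inl a}) : ∃ x : Fin t, f i = .inr x := by
      cases hi : f i with
      | inl a => exact absurd hi (i.2 a)
      | inr x => exact ⟨x, rfl⟩
    choose g hg using hnew
    have hg_inj : Function.Injective g := fun i j hij ↦
      Subtype.ext <| hf <| by rw [hg, hg, hij]
    simpa using Nat.card_le_card_of_injective g hg_inj

/-- The deficiency form of Hall's condition for nearly regular families, by double counting the
pairs `a ∈ N i` with `i ∈ S`. -/
theorem mul_card_le_mul_card_biUnion_add_sum [Fintype α] [Fintype ι] {L : ℝ} {x : ι → ℝ}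
    {y : α → ℝ} (hx₀ : 0 ≤ x) (hy₀ : 0 ≤ y) (hx : ∀ i, L ≤ #(N i) + x i)
    (hy : ∀ a, (#{i | a ∈ N i} : ℝ) ≤ L + y a) (S : Finset ι) :
    L * #S ≤ L * #(S.biUnion N) + (∑ i, x i + ∑ a, y a) := by
  have hcount : ∑ i ∈ S, #(N i) = ∑ a ∈ S.biUnion N, #{i ∈ S | a ∈ N i} := by
    refine .trans (sum_congr rfl fun i hi ↦ congrArg card ?_)
      (sum_card_bipartiteAbove_eq_sum_card_bipartiteBelow fun i a ↦ a ∈ N i)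
    rw [bipartiteAbove, filter_mem_eq_inter, inter_eq_right.2 (subset_biUnion_of_mem N hi)]
  calc L * #S = ∑ _i ∈ S, L := by rw [sum_const, nsmul_eq_mul, mul_comm]
    _ ≤ ∑ i ∈ S, (#(N i) + x i) := sum_le_sum fun i _ ↦ hx i
    _ = ∑ a ∈ S.biUnion N, (#{i ∈ S | a ∈ N i} : ℝ) + ∑ i ∈ S, x i := by
      rw [sum_add_distrib]; exact_mod_cast congrArg (· + ∑ i ∈ S, x i) (congrArg Nat.cast hcount)
    _ ≤ ∑ a ∈ S.biUnion N, (L + y a) + ∑ i, x i := by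
      gcongr with a _ _ _
      · refine le_trans ?_ (hy a)
        gcongr
        exact subset_univ S
      · exact fun _ _ _ ↦ hx₀ _
      · exact subset_univ S
    _ ≤ L * #(S.biUnion N) + (∑ i, x i + ∑ a, y a) := by
      rw [sum_add_distrib, sum_const, nsmul_eq_mul, mul_comm, add_assoc, add_comm (∑ i, x i)]
      gcongr
      · exact fun a _ _ ↦ hy₀ a
      · exact subset_univ _

end Hall

section RandomColoring

open Function
open scoped BigOperators

variable {V ι κ : Type*}

theorem expect_expect_update [Fintype V] [Fintype κ] [Nonempty κ] (v : V) (F : (V → κ) → ℝ) :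
    𝔼 c : V → κ, 𝔼 a, F (update c v a) = 𝔼 c, F c := by
  let e : (V → κ) × κ ≃ (V → κ) × κ :=
    Involutive.toPerm (fun p ↦ (update p.1 v p.2, p.1 v)) fun p ↦ by simp
  calc 𝔼 c : V → κ, 𝔼 a, F (update c v a)
      = 𝔼 p : (V → κ) × κ, F (update p.1 v p.2) := (expect_product' univ univ _).symm
    _ = 𝔼 p : (V → κ) × κ, F p.1 := Fintype.expect_equiv e _ _ fun p ↦ rfl
    _ = 𝔼 c, 𝔼 _a : κ, F c := expect_product' univ univ fun c _ ↦ F c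
    _ = 𝔼 c, F c := by simp only [Fintype.expect_const]

variable [Fintype κ] [DecidableEq κ]

/-- The Euclidean distance between the distribution of the colors on `s` and the uniform one; it
measures how far a random coloring is from splitting `s` evenly. -/
def colorDiscrepancy (s : Finset V) (c : V → κ) : ℝ :=
  √(∑ j, (#{v ∈ s | c v = j} - (#s : ℝ) / Fintype.card κ) ^ 2)

theorem colorDiscrepancy_nonneg (s : Finset V) (c : V → κ) : 0 ≤ colorDiscrepancy s c :=
  Real.sqrt_nonneg _

theorem abs_card_filter_sub_le_colorDiscrepancy (s : Finset V) (c : V → κ) (j : κ) :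
    |#{v ∈ s | c v = j} - (#s : ℝ) / Fintype.card κ| ≤ colorDiscrepancy s c :=
  Real.abs_le_sqrt <| single_le_sum
    (f := fun j ↦ (#{v ∈ s | c v = j} - (#s : ℝ) / Fintype.card κ) ^ 2)
    (fun _ _ ↦ sq_nonneg _) (mem_univ j)

theorem sum_sq_card_filter_eq (s : Finset V) (c : V → κ) :
    ∑ j, (#{v ∈ s | c v = j} : ℝ) ^ 2 = ∑ v ∈ s, ∑ w ∈ s, if c v = c w then 1 else 0 := by
  simp only [card_filter, Nat.cast_sum, Nat.cast_ite, Nat.cast_one, Nat.cast_zero, sq, sum_mul_sum]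
  rw [sum_comm]
  refine sum_congr rfl fun v _ ↦ ?_
  rw [sum_comm]
  exact sum_congr rfl fun w _ ↦ by simp [eq_comm]

theorem colorDiscrepancy_sq [Nonempty κ] (s : Finset V) (c : V → κ) :
    colorDiscrepancy s c ^ 2 =
      ∑ v ∈ s, ∑ w ∈ s, (if c v = c w then 1 else 0) - (#s : ℝ) ^ 2 / Fintype.card κ := by
  have hsum : ∑ j, (#{v ∈ s | c v = j} : ℝ) = #s := by
    exact_mod_cast (card_eq_sum_card_fiberwise fun v _ ↦ mem_univ (c v)).symm
  rw [colorDiscrepancy, Real.sq_sqrt (sum_nonneg fun _ _ ↦ sq_nonneg _), ← sum_sq_card_filter_eq]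
  simp only [sub_sq, sum_add_distrib, sum_sub_distrib, ← sum_mul, ← mul_sum, hsum, sum_const,
    card_univ, nsmul_eq_mul]
  field_simp
  ring

variable [Fintype V] [Nonempty κ]

theorem expect_ite_apply_eq (v : V) (φ : (V → κ) → κ) (hφ : ∀ c a, φ (update c v a) = φ c) :
    𝔼 c : V → κ, (if c v = φ c then 1 else 0 : ℝ) = 1 / Fintype.card κ := by
  rw [← expect_expect_update v]
  simp only [update_self, hφ, Fintype.expect_eq_sum_div_card, sum_ite_eq', mem_univ, if_true,
    sum_const, card_univ, nsmul_eq_mul]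
  field_simp

theorem expect_colorDiscrepancy_sq_le (s : Finset V) :
    𝔼 c : V → κ, colorDiscrepancy s c ^ 2 ≤ #s := by
  have hpair (v w : V) : 𝔼 c : V → κ, (if c v = c w then 1 else 0 : ℝ) ≤
      1 / Fintype.card κ + if v = w then 1 else 0 := by
    obtain rfl | hvw := eq_or_ne v w
    · simp
    · rw [if_neg hvw, add_zero]
      exact (expect_ite_apply_eq v (fun c ↦ c w) fun c a ↦ by simp [hvw.symm]).le
  calc 𝔼 c : V → κ, colorDiscrepancy s c ^ 2
      = ∑ v ∈ s, ∑ w ∈ s, 𝔼 c : V → κ, (if c v = c w then 1 else 0) -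
          (#s : ℝ) ^ 2 / Fintype.card κ := by
        simp only [colorDiscrepancy_sq, expect_sub_distrib, expect_sum_comm, Fintype.expect_const]
    _ ≤ ∑ v ∈ s, ∑ w ∈ s, (1 / (Fintype.card κ : ℝ) + if v = w then 1 else 0) -
          (#s : ℝ) ^ 2 / Fintype.card κ := by
        gcongr with v _ w
        exact hpair v w
    _ = #s := by
        simp only [sum_add_distrib, sum_const, nsmul_eq_mul, sum_ite_eq, sum_ite_mem, inter_self]
        ring

theorem expect_colorDiscrepancy_le (s : Finset V) :
    𝔼 c : V → κ, colorDiscrepancy s c ≤ √(#s) := by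
  refine Real.le_sqrt_of_sq_le ?_
  calc (𝔼 c : V → κ, colorDiscrepancy s c) ^ 2
      ≤ (𝔼 c : V → κ, colorDiscrepancy s c ^ 2) * 𝔼 _c : V → κ, 1 ^ 2 := by
        simpa only [mul_one] using
          expect_mul_sq_le_sq_mul_sq univ (fun c : V → κ ↦ colorDiscrepancy s c) fun _ ↦ 1
    _ ≤ #s := by simpa using expect_colorDiscrepancy_sq_le s

theorem exists_coloring_card_add_sum_colorDiscrepancy_le [Fintype ι] (s : ι → Finset V) (j : κ)
    (x : ℝ) {y : ℝ} (hy : 0 ≤ y) :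
    ∃ c : V → κ, x * #{v | c v = j} + y * ∑ i, colorDiscrepancy (s i) c ≤
      x * (Fintype.card V / Fintype.card κ) + y * ∑ i, √(#(s i)) := by
  have hcard : 𝔼 c : V → κ, (#{v | c v = j} : ℝ) = Fintype.card V / Fintype.card κ := by
    simp only [card_filter, Nat.cast_sum, Nat.cast_ite, Nat.cast_one, Nat.cast_zero,
      expect_sum_comm, expect_ite_apply_eq _ (fun _ ↦ j) fun _ _ ↦ rfl, sum_const, card_univ,
      nsmul_eq_mul, mul_one_div]
  obtain ⟨c, -, hc⟩ := exists_le_of_expect_le univ_nonempty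
    (f := fun c : V → κ ↦ x * #{v | c v = j} + y * ∑ i, colorDiscrepancy (s i) c) <| calc
      _ = x * (Fintype.card V / Fintype.card κ) +
            y * ∑ i, 𝔼 c : V → κ, colorDiscrepancy (s i) c := by
          rw [expect_add_distrib, ← mul_expect, ← mul_expect, hcard, expect_sum_comm]
      _ ≤ x * (Fintype.card V / Fintype.card κ) + y * ∑ i, √(#(s i)) := by
          gcongr
          exact expect_colorDiscrepancy_le _
  exact ⟨c, hc⟩

end RandomColoring

section Graph

variable {V : Type*} [Fintype V] (G : SimpleGraph V) {m : ℕ} (c : V → Fin m)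

/-- The neighbors of `u` in the layer just below the layer of `u`, for the layering `c`. -/
def neighborsBelow (u : V) : Finset V :=
  {v ∈ G.neighborFinset u | (c v : ℕ) + 1 = c u}

theorem mem_neighborsBelow {u v : V} :
    v ∈ neighborsBelow G c u ↔ G.Adj u v ∧ (c v : ℕ) + 1 = c u := by
  simp [neighborsBelow]

theorem le_card_neighborsBelow_add [NeZero m] {u : V} {L : ℝ} (hL : L ≤ G.degree u / m) :
    L ≤ #(neighborsBelow G c u) +
      ((if c u = 0 then L else 0) + colorDiscrepancy (G.neighborFinset u) c) := by
  have hdisc := colorDiscrepancy_nonneg (G.neighborFinset u) c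
  split_ifs with hu
  · linarith [Nat.cast_nonneg (α := ℝ) #(neighborsBelow G c u)]
  · have hpos : (c u : ℕ) ≠ 0 := fun h ↦ hu (Fin.ext h)
    let j : Fin m := ⟨c u - 1, by omega⟩
    have hlayer : neighborsBelow G c u = {v ∈ G.neighborFinset u | c v = j} :=
      filter_congr fun v _ ↦ by rw [Fin.ext_iff]; simp only [j]; omega
    have := (abs_le.1 (abs_card_filter_sub_le_colorDiscrepancy (G.neighborFinset u) c j)).1
    rw [Fintype.card_fin, SimpleGraph.card_neighborFinset_eq_degree] at this
    rw [hlayer]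
    linarith

theorem card_filter_mem_neighborsBelow_le (v : V) :
    (#{u | v ∈ neighborsBelow G c u} : ℝ) ≤
      (G.degree v : ℝ) / m + colorDiscrepancy (G.neighborFinset v) c := by
  obtain hempty | ⟨w, hw⟩ := ({u | v ∈ neighborsBelow G c u} : Finset V).eq_empty_or_nonempty
  · rw [hempty, card_empty, Nat.cast_zero]
    exact add_nonneg (by positivity) (colorDiscrepancy_nonneg _ _)
  · have hlayer : ({u | v ∈ neighborsBelow G c u} : Finset V) ⊆
        {u ∈ G.neighborFinset v | c u = c w} := fun u hu ↦ by
      simp only [mem_filter_univ, mem_neighborsBelow] at hu hw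
      simp only [mem_filter, SimpleGraph.mem_neighborFinset, Fin.ext_iff]
      exact ⟨hu.1.symm, by omega⟩
    have := (abs_le.1 (abs_card_filter_sub_le_colorDiscrepancy (G.neighborFinset v) c (c w))).2
    rw [Fintype.card_fin, SimpleGraph.card_neighborFinset_eq_degree] at this
    have hcard : (#{u | v ∈ neighborsBelow G c u} : ℝ) ≤
        #{u ∈ G.neighborFinset v | c u = c w} := by gcongr
    linarith

theorem exists_isPathPartition_of_card_le_card_biUnion_neighborsBelow_add {t : ℕ}
    (h : ∀ S : Finset V, #S ≤ #(S.biUnion (neighborsBelow G c)) + t) :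
    ∃ k ≤ t, ∃ f : Fin k → List V, IsPathPartition G.Adj f := by
  obtain ⟨r, hr, hmem, hcard⟩ := exists_biUnique_of_card_le_card_biUnion_add _ h
  have harc {u v} (huv : r u v) : G.Adj v u ∧ (c u : ℕ) + 1 = c v :=
    (mem_neighborsBelow G c).1 (hmem u v huv)
  have hlt {u v} (huv : r u v) : c u < c v := Fin.lt_def.2 (by have := (harc huv).2; omega)
  obtain ⟨f, hf⟩ := exists_isPathPartition_of_biUnique
    (Subrelation.wf hlt (InvImage.wf c wellFounded_lt))
    (Subrelation.wf (fun h ↦ hlt h) (InvImage.wf c wellFounded_gt)) hr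
  exact ⟨_, hcard, _,
    (hf.comp_equiv (Finite.equivFin _).symm).mono fun u v huv ↦ (harc huv).1.symm⟩

theorem mul_card_le_mul_card_biUnion_neighborsBelow_add [NeZero m] {a b : ℝ} (ha : 0 ≤ a)
    (hdeg : ∀ v, (G.degree v : ℝ) ∈ Set.Icc a b) (S : Finset V) :
    a / m * #S ≤ a / m * #(S.biUnion (neighborsBelow G c)) + ((b - a) / m * Fintype.card V +
      (a / m * #{v | c v = 0} + 2 * ∑ v, colorDiscrepancy (G.neighborFinset v) c)) := by
  let D (v : V) : ℝ := colorDiscrepancy (G.neighborFinset v) c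
  have hD (v) : 0 ≤ D v := colorDiscrepancy_nonneg _ _
  have hlow (u) := le_card_neighborsBelow_add G c (u := u) (L := a / m) <| by
    gcongr
    exact (hdeg u).1
  have hhigh (v) : (#{u | v ∈ neighborsBelow G c u} : ℝ) ≤ a / m + ((b - a) / m + D v) :=
    calc (#{u | v ∈ neighborsBelow G c u} : ℝ)
        ≤ G.degree v / m + D v := card_filter_mem_neighborsBelow_le G c v
      _ ≤ b / m + D v := by gcongr; exact (hdeg v).2
      _ = a / m + ((b - a) / m + D v) := by ring
  have hba (v) : 0 ≤ (b - a) / m :=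
    div_nonneg (sub_nonneg.2 ((hdeg v).1.trans (hdeg v).2)) m.cast_nonneg
  refine (mul_card_le_mul_card_biUnion_add_sum (neighborsBelow G c)
    (fun u ↦ add_nonneg (by positivity) (hD u)) (fun v ↦ add_nonneg (hba v) (hD v))
    hlow hhigh S).trans_eq ?_
  simp only [sum_add_distrib, ← sum_filter, sum_const, card_univ, nsmul_eq_mul, D]
  ring

theorem exists_isPathPartition_of_degree_mem_Icc (m : ℕ) [NeZero m] {a b : ℝ} (ha : 0 < a)
    (hdeg : ∀ v, (G.degree v : ℝ) ∈ Set.Icc a b) :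
    ∃ (k : ℕ) (f : Fin k → List V),
      k ≤ ((b - a) / a + 1 / m + 2 * m * √b / a) * Fintype.card V ∧ IsPathPartition G.Adj f := by
  set B : ℝ := ((b - a) / a + 1 / m + 2 * m * √b / a) * Fintype.card V
  have hm : (0 : ℝ) < m := Nat.cast_pos.2 (NeZero.pos m)
  obtain ⟨c, hc⟩ := exists_coloring_card_add_sum_colorDiscrepancy_le (fun v ↦ G.neighborFinset v)
    (0 : Fin m) (a / m) zero_le_two
  have hsqrt : ∑ v, √(#(G.neighborFinset v)) ≤ Fintype.card V * √b :=
    calc ∑ v, √(#(G.neighborFinset v)) ≤ ∑ _v : V, √b :=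
          sum_le_sum fun v _ ↦ Real.sqrt_le_sqrt (hdeg v).2
      _ = Fintype.card V * √b := by rw [sum_const, card_univ, nsmul_eq_mul]
  have hhall (S : Finset V) : (#S : ℝ) ≤ B + #(S.biUnion (neighborsBelow G c)) := by
    refine le_of_mul_le_mul_left ?_ (div_pos ha hm)
    calc a / m * #S
        ≤ a / m * #(S.biUnion (neighborsBelow G c)) + ((b - a) / m * Fintype.card V +
            (a / m * (Fintype.card V / m) + 2 * (Fintype.card V * √b))) := by
          rw [Fintype.card_fin] at hc
          linarith [mul_card_le_mul_card_biUnion_neighborsBelow_add G c ha.le hdeg S]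
      _ = a / m * (B + #(S.biUnion (neighborsBelow G c))) := by
          simp only [B]
          field_simp
          ring
  have hB : 0 ≤ B := by simpa using hhall ∅
  obtain ⟨k, hk, f, hf⟩ := exists_isPathPartition_of_card_le_card_biUnion_neighborsBelow_add G c
    (t := ⌊B⌋₊) fun S ↦ by
      rw [add_comm, ← Nat.floor_add_natCast hB]
      exact Nat.le_floor (hhall S)
  exact ⟨k, f, (Nat.cast_le.2 hk).trans (Nat.floor_le hB), hf⟩

theorem ncard_neighborSet_eq_degree (v : V) : (G.neighborSet v).ncard = G.degree v := by
  rw [Set.ncard_eq_toFinset_card', SimpleGraph.degree, SimpleGraph.neighborFinset]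

end Graph

theorem stmt_7_general (ε : ℝ) {η : ℝ} (hη : 0 < η) :
    ∃ d₀ : ℕ, ∀ d : ℕ, d₀ ≤ d → ∀ (V : Type*) [Fintype V], ∀ G : SimpleGraph V,
      (∀ v, (G.degree v : ℝ) ∈ Set.Icc (d : ℝ) ((1 + ε) * d)) →
        ∃ (k : ℕ) (f : Fin k → List V),
          k ≤ (ε + η) * Fintype.card V ∧ IsPathPartition G.Adj f := by
  obtain ⟨n, hn⟩ := exists_nat_one_div_lt (half_pos hη)
  set m : ℕ := n + 1
  obtain ⟨d₀, hd₀⟩ := exists_nat_ge (16 * m ^ 2 * (1 + ε) / η ^ 2)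
  refine ⟨d₀ + 1, fun d hd V _ G hdeg ↦ ?_⟩
  have hm_inv : (1 : ℝ) / m ≤ η / 2 := by simpa [m] using hn.le
  have hd_pos : (0 : ℝ) < d := by exact_mod_cast (Nat.succ_pos d₀).trans_le hd
  have hm_pos : (0 : ℝ) < m := Nat.cast_pos.2 n.succ_pos
  have hd_large : 16 * m ^ 2 * (1 + ε) ≤ d * η ^ 2 :=
    (div_le_iff₀ (by positivity)).1 (hd₀.trans (Nat.cast_le.2 (d₀.le_succ.trans hd)))
  have hsqrt : √((1 + ε) * d) ≤ η * d / (4 * m) := by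
    refine Real.sqrt_le_iff.2 ⟨by positivity, ?_⟩
    rw [div_pow, le_div_iff₀ (by positivity)]
    linarith [mul_le_mul_of_nonneg_right hd_large hd_pos.le]
  have hbound : ((1 + ε) * d - d) / d + 1 / m + 2 * m * √((1 + ε) * d) / d ≤ ε + η :=
    calc ((1 + ε) * d - d) / d + 1 / m + 2 * m * √((1 + ε) * d) / d
        ≤ ((1 + ε) * d - d) / d + η / 2 + 2 * m * (η * d / (4 * m)) / d := by
          gcongr
      _ = ε + η := by field_simp; ring
  obtain ⟨k, f, hk, hf⟩ := exists_isPathPartition_of_degree_mem_Icc G m hd_pos hdeg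
  exact ⟨k, f, hk.trans (by gcongr), hf⟩

theorem stmt_7 (ε : ℝ) (hε : 0 < ε) :
    ∃ d₀ : ℕ, ∀ d : ℕ, d₀ ≤ d →
      ∀ (V : Type) [Fintype V], ∀ G : SimpleGraph V,
        (∀ v : V, (d : ℝ) ≤ ((G.neighborSet v).ncard : ℝ)) →
        (∀ v : V, ((G.neighborSet v).ncard : ℝ) ≤ (1 + ε) * d) →
        ∃ (k : ℕ) (f : Fin k → List V),
          (k : ℝ) ≤ 2 * ε * (Fintype.card V) ∧
          (∀ i, f i ≠ [] ∧ (f i).Nodup ∧ (f i).Chain' G.Adj) ∧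
          (∀ v : V, ∃! i, v ∈ f i) := by
  obtain ⟨d₀, h⟩ := stmt_7_general ε hε
  refine ⟨d₀, fun d hd V _ G hlow hhigh ↦ ?_⟩
  simp only [ncard_neighborSet_eq_degree] at hlow hhigh
  obtain ⟨k, f, hk, hf⟩ := h d hd V G fun v ↦ ⟨hlow v, hhigh v⟩
  exact ⟨k, f, by rwa [two_mul], fun i ↦ ⟨hf.ne_nil i, hf.nodup i, hf.isChain i⟩,
    hf.existsUnique_mem⟩
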